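/- Let G be any group and E a separable dual Banach G-module. Then every bounded function b : G → E satisfying the cocycle identity b(gh) = g•b(h) + b(g) for all g, h ∈ G is a coboundary: there exists v ∈ E such that b(g) = g•v − v for all g ∈ G. Equivalently, Hb^1(G, E) = 0. -/

import Mathlib

/-- The contragredient action of `G` on the continuous dual of `F` induced by an
isometric action `ρ` of `G` on `F`: `(g • φ)(v) = φ (g⁻¹ • v)`. -/
def contragredient {G : Type*} [Group G] {F : Type*} [NormedAddCommGroup F]
    [NormedSpace ℝ F] (ρ : G →* (F ≃ₗᵢ[ℝ] F)) : G → (F →L[ℝ] ℝ) → (F →L[ℝ] ℝ) :=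
  fun g φ => φ.comp (ρ g⁻¹).toLinearIsometry.toContinuousLinearMap

/-!
A bounded cocycle `b` turns `E = F*` into a space on which `G` acts by weak-* continuous isometries
`g * x = g • x + b g` with bounded orbits, and `b` is a coboundary as soon as this action has a
fixed point. By Banach–Alaoglu there is a minimal nonempty weak-* compact convex invariant set `K`,
and inside it a minimal nonempty weak-* compact invariant set `M`. Norm separability and Baire's
theorem produce a weak-* open subset of `M` of small norm diameter; by minimality, finitely many
translates of it cover `M`, so `M` is totally bounded in norm. If `M` had diameter `d > 0`, the
centroid of a finite `d / 2`-net of `M` would lie at distance at most some `r < d` from all of `M`.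
The points of `K` with that property form a closed convex invariant set, which is all of `K` by
minimality, so that `d ≤ r`. Hence `M` is a single fixed point.
-/

open Set

section Minimal

variable {G X : Type*} [TopologicalSpace X]

theorem exists_minimal_nonempty_of_isCompact {Q : Set X → Prop}
    (hQ_closed : ∀ s, Q s → IsClosed s)
    (hQ_sInter : ∀ S : Set (Set X), S.Nonempty → (∀ s ∈ S, Q s) → Q (⋂₀ S))
    {K : Set X} (hK : IsCompact K) (hK_ne : K.Nonempty) (hQK : Q K) :
    ∃ M ⊆ K, Minimal (fun s ↦ s.Nonempty ∧ Q s) M := by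
  have hlower (c : Set (Set X)) (hc : c ⊆ {s | s ⊆ K ∧ s.Nonempty ∧ Q s})
      (hchain : IsChain (· ⊆ ·) c) (hc_ne : c.Nonempty) :
      ∃ lb ∈ {s | s ⊆ K ∧ s.Nonempty ∧ Q s}, ∀ s ∈ c, lb ⊆ s := by
    have : Nonempty c := hc_ne.to_subtype
    have hc_inter : (⋂₀ c).Nonempty :=
      IsCompact.nonempty_sInter_of_directed_nonempty_isCompact_isClosed
        (fun s hs t ht ↦ (hchain.total hs ht).elim (fun hst ↦ ⟨s, hs, subset_rfl, hst⟩)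
          fun hts ↦ ⟨t, ht, hts, subset_rfl⟩)
        (fun s hs ↦ (hc hs).2.1)
        (fun s hs ↦ hK.of_isClosed_subset (hQ_closed s (hc hs).2.2) (hc hs).1)
        (fun s hs ↦ hQ_closed s (hc hs).2.2)
    obtain ⟨s, hs⟩ := hc_ne
    exact ⟨⋂₀ c, ⟨(sInter_subset_of_mem hs).trans (hc hs).1, hc_inter,
      hQ_sInter c ⟨s, hs⟩ fun s hs ↦ (hc hs).2.2⟩, fun s hs ↦ sInter_subset_of_mem hs⟩
  obtain ⟨M, hMK, hM⟩ := zorn_superset_nonempty _ hlower K ⟨subset_rfl, hK_ne, hQK⟩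
  exact ⟨M, hMK, hM.prop.2, fun s hs hsM ↦ hM.le_of_le ⟨hsM.trans hMK, hs⟩ hsM⟩

/-- The closed subsets of `X` mapped into themselves by every element of `G`: the candidates among
which minimal sets of the action are sought. -/
structure IsClosedInvariant (G : Type*) [SMul G X] (s : Set X) : Prop where
  isClosed : IsClosed s
  smul_mem : ∀ (g : G), ∀ x ∈ s, g • x ∈ s

namespace IsClosedInvariant

theorem sInter [SMul G X] {S : Set (Set X)} (hS : ∀ s ∈ S, IsClosedInvariant G s) :
    IsClosedInvariant G (⋂₀ S) where
  isClosed := isClosed_sInter fun s hs ↦ (hS s hs).isClosed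
  smul_mem g x hx s hs := (hS s hs).smul_mem g x (hx s hs)

theorem inter [SMul G X] {s t : Set X} (hs : IsClosedInvariant G s) (ht : IsClosedInvariant G t) :
    IsClosedInvariant G (s ∩ t) where
  isClosed := hs.isClosed.inter ht.isClosed
  smul_mem g x hx := ⟨hs.smul_mem g x hx.1, ht.smul_mem g x hx.2⟩

end IsClosedInvariant

theorem exists_finset_subset_biUnion_preimage_smul [Monoid G] [MulAction G X]
    [ContinuousConstSMul G X] {M : Set X}
    (hM : Minimal (fun s ↦ s.Nonempty ∧ IsClosedInvariant G s) M) (hM_compact : IsCompact M)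
    {U : Set X} (hU : IsOpen U) (hMU : (M ∩ U).Nonempty) :
    ∃ t : Finset G, M ⊆ ⋃ g ∈ t, (g • ·) ⁻¹' U := by
  have hU_smul (g : G) : IsOpen ((g • ·) ⁻¹' U : Set X) := hU.preimage (continuous_const_smul g)
  refine hM_compact.elim_finite_subcover _ hU_smul ?_
  set W : Set X := ⋃ g : G, (g • ·) ⁻¹' U
  have hW_compl : IsClosedInvariant G Wᶜ :=
    { isClosed := (isOpen_iUnion hU_smul).isClosed_compl
      smul_mem := fun g x hx hgx ↦ hx <| by
        obtain ⟨k, hk⟩ := mem_iUnion.mp hgx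
        exact mem_iUnion.mpr ⟨k * g, by simpa [mul_smul] using hk⟩ }
  by_contra hMW
  obtain ⟨w, hwM, hwU⟩ := hMU
  have hM_le : M ⊆ M ∩ Wᶜ :=
    hM.le_of_le ⟨inter_compl_nonempty_iff.mpr hMW, hM.prop.2.inter hW_compl⟩ inter_subset_left
  exact (hM_le hwM).2 (mem_iUnion.mpr ⟨1, by simpa using hwU⟩)

end Minimal

section Seminorm

variable {V : Type*} [AddCommGroup V] [Module ℝ V] {p : Seminorm ℝ V}

theorem exists_mem_convexHull_forall_seminorm_sub_le {A : Finset V} (hA : A.Nonempty) {X : Set V}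
    {d ε : ℝ} (hε : ε < d) (hd : ∀ y ∈ X, ∀ a ∈ A, p (y - a) ≤ d)
    (hcover : X ⊆ ⋃ a ∈ A, p.closedBall a ε) :
    ∃ z ∈ convexHull ℝ (A : Set V), ∃ r < d, ∀ y ∈ X, p (y - z) ≤ r := by
  classical
  set w : ℝ := (A.card : ℝ)⁻¹ with hw
  have hw_pos : 0 < w := by simpa [hw] using hA.card_pos
  have hw_sum : ∑ _a ∈ A, w = 1 := by simp [hw, hA.ne_empty]
  refine ⟨∑ a ∈ A, w • a, (convex_convexHull ℝ _).sum_mem (fun _ _ ↦ hw_pos.le) hw_sum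
    fun a ha ↦ subset_convexHull ℝ _ ha, d - w * (d - ε), by nlinarith, fun y hy ↦ ?_⟩
  obtain ⟨c, hc, hyc⟩ := mem_iUnion₂.mp (hcover hy)
  have hdist (a : V) (ha : a ∈ A) : p (y - a) ≤ d - if a = c then d - ε else 0 := by
    split_ifs with hac
    · simpa [hac] using hyc
    · simpa using hd y hy a ha
  calc p (y - ∑ a ∈ A, w • a)
      = p (∑ a ∈ A, w • (y - a)) := by
        simp only [smul_sub, Finset.sum_sub_distrib, ← Finset.sum_smul, hw_sum, one_smul]
    _ ≤ ∑ a ∈ A, w * p (y - a) :=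
        p.convexOn.map_sum_le (fun _ _ ↦ hw_pos.le) hw_sum fun _ _ ↦ mem_univ _
    _ ≤ ∑ a ∈ A, w * (d - if a = c then d - ε else 0) := by
        gcongr with a ha
        exact hdist a ha
    _ = d - w * (d - ε) := by
        simp only [mul_sub w d, Finset.sum_sub_distrib, ← Finset.sum_mul, hw_sum, one_mul,
          ← Finset.mul_sum, Finset.sum_ite_eq', if_pos hc]

theorem bddAbove_seminorm_sub_of_subset_biUnion_closedBall {A : Finset V} {X : Set V} {ε : ℝ}
    (hcover : X ⊆ ⋃ a ∈ A, p.closedBall a ε) : BddAbove (image2 (fun x y ↦ p (x - y)) X X) := by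
  have hX (x : V) (hx : x ∈ X) : p x ≤ ∑ a ∈ A, p a + ε := by
    obtain ⟨a, ha, hxa⟩ := mem_iUnion₂.mp (hcover hx)
    have hpa : p a ≤ ∑ a ∈ A, p a := Finset.single_le_sum (fun a _ ↦ apply_nonneg p a) ha
    calc p x = p (a + (x - a)) := by rw [add_sub_cancel]
      _ ≤ p a + p (x - a) := map_add_le_add p _ _
      _ ≤ ∑ a ∈ A, p a + ε := add_le_add hpa (p.mem_closedBall.mp hxa)
  exact ⟨_, forall_mem_image2.mpr fun x hx y hy ↦
    (map_sub_le_add p x y).trans (add_le_add (hX x hx) (hX y hy))⟩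

theorem exists_isOpen_forall_seminorm_sub_le [TopologicalSpace V] [R1Space V]
    (hball : ∀ (c : V) (r : ℝ), IsClosed (p.closedBall c r)) {M : Set V} (hM : IsCompact M)
    (hM_ne : M.Nonempty) {ι : Type*} [Countable ι] {u : ι → V} {ε : ℝ}
    (hcover : M ⊆ ⋃ i, p.closedBall (u i) ε) :
    ∃ U : Set V, IsOpen U ∧ (M ∩ U).Nonempty ∧ ∀ x ∈ M ∩ U, ∀ y ∈ M ∩ U, p (x - y) ≤ 2 * ε := by
  have : CompactSpace M := isCompact_iff_compactSpace.mp hM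
  have : Nonempty M := hM_ne.to_subtype
  obtain ⟨i, hi⟩ := nonempty_interior_of_iUnion_of_closed
    (f := fun i ↦ ((↑) : M → V) ⁻¹' p.closedBall (u i) ε)
    (fun i ↦ (hball _ _).preimage continuous_subtype_val)
    (by rwa [← preimage_iUnion, preimage_eq_univ_iff, Subtype.range_coe])
  obtain ⟨U, hU, hU_eq⟩ :=
    isOpen_induced_iff.mp (isOpen_interior (s := ((↑) : M → V) ⁻¹' p.closedBall (u i) ε))
  have hU_ball (x : V) (hx : x ∈ M ∩ U) : p (x - u i) ≤ ε :=
    have hx_int := hU_eq.subset (show (⟨x, hx.1⟩ : M) ∈ (↑) ⁻¹' U from hx.2)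
    p.mem_closedBall.mp (mem_preimage.mp (interior_subset hx_int))
  refine ⟨U, hU, ?_, fun x hx y hy ↦ ?_⟩
  · obtain ⟨x, hx⟩ := hi
    exact ⟨x, x.2, hU_eq.superset hx⟩
  · calc p (x - y) = p ((x - u i) - (y - u i)) := by rw [sub_sub_sub_cancel_right]
      _ ≤ p (x - u i) + p (y - u i) := map_sub_le_add p _ _
      _ ≤ 2 * ε := by linarith [hU_ball x hx, hU_ball y hy]

variable {G : Type*} [Group G] [MulAction G V]

theorem seminorm_sub_smul (hiso : ∀ (g : G) (x y : V), p (g • x - g • y) = p (x - y))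
    (g : G) (x y : V) : p (x - g • y) = p (g⁻¹ • x - y) := by
  rw [← hiso g (g⁻¹ • x) y, smul_inv_smul]

variable [TopologicalSpace V]

theorem exists_finset_subset_biUnion_closedBall_of_minimal [ContinuousConstSMul G V] [R1Space V]
    (hiso : ∀ (g : G) (x y : V), p (g • x - g • y) = p (x - y))
    (hball : ∀ (c : V) (r : ℝ), IsClosed (p.closedBall c r)) {M : Set V}
    (hM : Minimal (fun s ↦ s.Nonempty ∧ IsClosedInvariant G s) M) (hM_compact : IsCompact M)
    {ι : Type*} [Countable ι] {u : ι → V} {ε : ℝ} (hcover : M ⊆ ⋃ i, p.closedBall (u i) ε) :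
    ∃ A : Finset V, ↑A ⊆ M ∧ M ⊆ ⋃ a ∈ A, p.closedBall a (2 * ε) := by
  classical
  obtain ⟨U, hU, ⟨w, hw⟩, hU_small⟩ :=
    exists_isOpen_forall_seminorm_sub_le hball hM_compact hM.prop.1 hcover
  obtain ⟨t, ht⟩ := exists_finset_subset_biUnion_preimage_smul hM hM_compact hU ⟨w, hw⟩
  have hM_smul := hM.prop.2.smul_mem
  refine ⟨t.image fun g ↦ g⁻¹ • w, ?_, fun y hy ↦ ?_⟩
  · simpa [subset_def] using fun g _ ↦ hM_smul g⁻¹ w hw.1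
  · obtain ⟨g, hg, hgy⟩ := mem_iUnion₂.mp (ht hy)
    refine mem_iUnion₂.mpr ⟨g⁻¹ • w, Finset.mem_image_of_mem _ hg, ?_⟩
    rw [p.mem_closedBall, seminorm_sub_smul hiso, inv_inv]
    exact hU_small _ ⟨hM_smul g y hy, hgy⟩ w hw

theorem IsClosedInvariant.biInter_closedBall
    (hiso : ∀ (g : G) (x y : V), p (g • x - g • y) = p (x - y))
    (hball : ∀ (c : V) (r : ℝ), IsClosed (p.closedBall c r)) {M : Set V}
    (hM_smul : ∀ (g : G), ∀ x ∈ M, g • x ∈ M) (r : ℝ) :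
    IsClosedInvariant G (⋂ x ∈ M, p.closedBall x r) where
  isClosed := isClosed_biInter fun x _ ↦ hball x r
  smul_mem g y hy := mem_iInter₂.mpr fun x hx ↦ by
    rw [p.mem_closedBall, map_sub_rev, seminorm_sub_smul hiso, map_sub_rev]
    exact mem_iInter₂.mp hy (g⁻¹ • x) (hM_smul g⁻¹ x hx)

theorem seminorm_sub_eq_zero_of_subset_minimal_convex
    (hiso : ∀ (g : G) (x y : V), p (g • x - g • y) = p (x - y))
    (hball : ∀ (c : V) (r : ℝ), IsClosed (p.closedBall c r)) {K M : Set V}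
    (hK : Minimal (fun s ↦ s.Nonempty ∧ Convex ℝ s ∧ IsClosedInvariant G s) K) (hMK : M ⊆ K)
    (hM_smul : ∀ (g : G), ∀ x ∈ M, g • x ∈ M)
    (hM_net : ∀ ε > 0, ∃ A : Finset V, ↑A ⊆ M ∧ M ⊆ ⋃ a ∈ A, p.closedBall a ε)
    {x y : V} (hx : x ∈ M) (hy : y ∈ M) : p (x - y) = 0 := by
  obtain ⟨A₁, -, hA₁⟩ := hM_net 1 one_pos
  obtain ⟨d, hd⟩ : ∃ d, IsLUB (image2 (fun x y ↦ p (x - y)) M M) d :=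
    Real.exists_isLUB ⟨_, mem_image2_of_mem hx hy⟩
      (bddAbove_seminorm_sub_of_subset_biUnion_closedBall hA₁)
  have hdist (x) (hx : x ∈ M) (y) (hy : y ∈ M) : p (x - y) ≤ d := hd.1 (mem_image2_of_mem hx hy)
  refine le_antisymm ((hdist x hx y hy).trans ?_) (apply_nonneg p _)
  by_contra! hd_pos
  obtain ⟨A, hAM, hA⟩ := hM_net (d / 2) (by positivity)
  have hA_ne : A.Nonempty := by
    obtain ⟨a, ha, -⟩ := mem_iUnion₂.mp (hA hx)
    exact ⟨a, ha⟩
  obtain ⟨z, hz, r, hr, hzr⟩ := exists_mem_convexHull_forall_seminorm_sub_le hA_ne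
    (half_lt_self hd_pos) (fun y hy a ha ↦ hdist y hy a (hAM ha)) hA
  have hzK : z ∈ K := convexHull_min (hAM.trans hMK) hK.prop.2.1 hz
  have hz_ball : z ∈ ⋂ x ∈ M, p.closedBall x r :=
    mem_iInter₂.mpr fun x hx ↦ by
      rw [p.mem_closedBall, map_sub_rev]
      exact hzr x hx
  have hK_ball : K ⊆ K ∩ ⋂ x ∈ M, p.closedBall x r :=
    hK.le_of_le ⟨⟨z, hzK, hz_ball⟩,
      hK.prop.2.1.inter (convex_iInter₂ fun x _ ↦ p.convex_closedBall x r),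
      hK.prop.2.2.inter (.biInter_closedBall hiso hball hM_smul r)⟩ inter_subset_left
  refine hr.not_ge (hd.2 (forall_mem_image2.mpr fun x hx y hy ↦ ?_))
  exact mem_iInter₂.mp (hK_ball (hMK hx)).2 y hy

theorem exists_mem_forall_smul_eq_of_isCompact_convex [ContinuousConstSMul G V] [R1Space V]
    (hp : ∀ x, p x = 0 → x = 0) (hiso : ∀ (g : G) (x y : V), p (g • x - g • y) = p (x - y))
    (hball : ∀ (c : V) (r : ℝ), IsClosed (p.closedBall c r)) {C : Set V} (hC : IsCompact C)
    (hC_ne : C.Nonempty) (hC_convex : Convex ℝ C) (hC_inv : IsClosedInvariant G C)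
    (hC_sep : ∀ ε > 0, ∃ u : ℕ → V, C ⊆ ⋃ n, p.closedBall (u n) ε) :
    ∃ x ∈ C, ∀ g : G, g • x = x := by
  obtain ⟨K, hKC, hK⟩ := exists_minimal_nonempty_of_isCompact
    (Q := fun s ↦ Convex ℝ s ∧ IsClosedInvariant G s) (fun s hs ↦ hs.2.isClosed)
    (fun _ _ hS ↦ ⟨convex_sInter fun s hs ↦ (hS s hs).1, .sInter fun s hs ↦ (hS s hs).2⟩)
    hC hC_ne ⟨hC_convex, hC_inv⟩
  have hK_compact : IsCompact K := hC.of_isClosed_subset hK.prop.2.2.isClosed hKC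
  obtain ⟨M, hMK, hM⟩ := exists_minimal_nonempty_of_isCompact (Q := IsClosedInvariant G)
    (fun s hs ↦ hs.isClosed) (fun _ _ hS ↦ .sInter hS) hK_compact hK.prop.1 hK.prop.2.2
  have hM_compact : IsCompact M := hK_compact.of_isClosed_subset hM.prop.2.isClosed hMK
  have hM_smul := hM.prop.2.smul_mem
  have hM_net (ε : ℝ) (hε : ε > 0) : ∃ A : Finset V, ↑A ⊆ M ∧ M ⊆ ⋃ a ∈ A, p.closedBall a ε := by
    obtain ⟨u, hu⟩ := hC_sep (ε / 2) (half_pos hε)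
    simpa [mul_div_cancel₀] using exists_finset_subset_biUnion_closedBall_of_minimal hiso hball
      hM hM_compact ((hMK.trans hKC).trans hu)
  obtain ⟨x, hx⟩ := hM.prop.1
  exact ⟨x, hKC (hMK hx), fun g ↦ sub_eq_zero.mp <| hp _ <|
    seminorm_sub_eq_zero_of_subset_minimal_convex hiso hball hK hMK hM_smul hM_net
      (hM_smul g x hx) hx⟩

end Seminorm

section WeakDual

open WeakDual

/-- The dual norm, as a seminorm on the dual equipped with its weak-* topology. -/
noncomputable def weakDualSeminorm (F : Type*) [SeminormedAddCommGroup F] [NormedSpace ℝ F] :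
    Seminorm ℝ (WeakDual ℝ F) :=
  (normSeminorm ℝ (StrongDual ℝ F)).comp (toStrongDual (𝕜 := ℝ) (E := F)).toLinearMap

variable {F : Type*} [SeminormedAddCommGroup F] [NormedSpace ℝ F]

theorem eq_zero_of_weakDualSeminorm_eq_zero {φ : WeakDual ℝ F} (hφ : weakDualSeminorm F φ = 0) :
    φ = 0 := by
  refine toStrongDual.map_eq_zero_iff.mp (ContinuousLinearMap.ext fun v ↦ ?_)
  simpa [show ‖toStrongDual φ‖ = 0 from hφ] using (toStrongDual φ).le_opNorm v

theorem closedBall_weakDualSeminorm (φ : WeakDual ℝ F) (r : ℝ) :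
    (weakDualSeminorm F).closedBall φ r =
      toStrongDual ⁻¹' Metric.closedBall (toStrongDual φ) r := by
  rw [weakDualSeminorm, Seminorm.closedBall_comp, closedBall_normSeminorm]
  rfl

theorem exists_seq_iUnion_closedBall_weakDualSeminorm_eq_univ
    [TopologicalSpace.SeparableSpace (StrongDual ℝ F)] {ε : ℝ} (hε : 0 < ε) :
    ∃ u : ℕ → WeakDual ℝ F, ⋃ n, (weakDualSeminorm F).closedBall (u n) ε = univ := by
  refine ⟨fun n ↦ StrongDual.toWeakDual (TopologicalSpace.denseSeq (StrongDual ℝ F) n),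
    iUnion_eq_univ_iff.mpr fun φ ↦ ?_⟩
  obtain ⟨n, hn⟩ := (TopologicalSpace.denseRange_denseSeq (StrongDual ℝ F)).exists_dist_lt
    (toStrongDual φ) hε
  exact ⟨n, by simpa [closedBall_weakDualSeminorm] using hn.le⟩

theorem exists_forall_smul_eq_of_bounded_orbit {G : Type*} [Group G] [MulAction G (WeakDual ℝ F)]
    [ContinuousConstSMul G (WeakDual ℝ F)] [TopologicalSpace.SeparableSpace (StrongDual ℝ F)]
    (hiso : ∀ (g : G) (φ ψ : WeakDual ℝ F),
      ‖toStrongDual (g • φ - g • ψ)‖ = ‖toStrongDual (φ - ψ)‖)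
    {φ₀ : WeakDual ℝ F} {C : ℝ} (hφ₀ : ∀ g : G, ‖toStrongDual (φ₀ - g • φ₀)‖ ≤ C) :
    ∃ φ : WeakDual ℝ F, ∀ g : G, g • φ = φ := by
  have hball (c : WeakDual ℝ F) (r : ℝ) : IsClosed ((weakDualSeminorm F).closedBall c r) := by
    rw [closedBall_weakDualSeminorm]
    exact isClosed_closedBall _ _
  set K := ⋂ φ ∈ MulAction.orbit G φ₀, (weakDualSeminorm F).closedBall φ C
  have hK_inv : IsClosedInvariant G K := .biInter_closedBall hiso hball
    (fun g _ hφ ↦ MulAction.mem_orbit_of_mem_orbit g hφ) C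
  have hK_compact : IsCompact K := by
    refine (isCompact_closedBall (toStrongDual φ₀) C).of_isClosed_subset hK_inv.isClosed ?_
    rw [← closedBall_weakDualSeminorm]
    exact biInter_subset_of_mem (MulAction.mem_orbit_self φ₀)
  have hφ₀K : φ₀ ∈ K := mem_iInter₂.mpr <| forall_mem_range.mpr hφ₀
  obtain ⟨φ, -, hφ⟩ := exists_mem_forall_smul_eq_of_isCompact_convex (p := weakDualSeminorm F)
    (fun _ ↦ eq_zero_of_weakDualSeminorm_eq_zero) hiso hball hK_compact ⟨φ₀, hφ₀K⟩
    (convex_iInter₂ fun φ _ ↦ (weakDualSeminorm F).convex_closedBall φ C) hK_inv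
    (fun ε hε ↦ (exists_seq_iUnion_closedBall_weakDualSeminorm_eq_univ hε).imp
      fun _ hu ↦ (subset_univ K).trans hu.superset)
  exact ⟨φ, hφ⟩

end WeakDual

section Cocycle

open WeakDual

variable {G : Type*} [Group G] {F : Type*} [NormedAddCommGroup F] [NormedSpace ℝ F]
  {ρ : G →* (F ≃ₗᵢ[ℝ] F)}

theorem contragredient_apply (g : G) (φ : F →L[ℝ] ℝ) (v : F) :
    contragredient ρ g φ v = φ (ρ g⁻¹ v) :=
  rfl

theorem contragredient_one (φ : F →L[ℝ] ℝ) : contragredient ρ 1 φ = φ := by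
  ext v
  simp [contragredient_apply]

theorem contragredient_mul (g h : G) (φ : F →L[ℝ] ℝ) :
    contragredient ρ (g * h) φ = contragredient ρ g (contragredient ρ h φ) := by
  ext v
  simp [contragredient_apply]

theorem contragredient_add (g : G) (φ ψ : F →L[ℝ] ℝ) :
    contragredient ρ g (φ + ψ) = contragredient ρ g φ + contragredient ρ g ψ :=
  ContinuousLinearMap.add_comp ..

theorem contragredient_sub (g : G) (φ ψ : F →L[ℝ] ℝ) :
    contragredient ρ g (φ - ψ) = contragredient ρ g φ - contragredient ρ g ψ :=
  ContinuousLinearMap.sub_comp ..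

theorem contragredient_neg (g : G) (φ : F →L[ℝ] ℝ) :
    contragredient ρ g (-φ) = -contragredient ρ g φ :=
  ContinuousLinearMap.neg_comp ..

theorem contragredient_zero (g : G) : contragredient ρ g 0 = 0 :=
  ContinuousLinearMap.zero_comp _

theorem norm_contragredient (g : G) (φ : F →L[ℝ] ℝ) : ‖contragredient ρ g φ‖ = ‖φ‖ :=
  ContinuousLinearMap.opNorm_comp_linearIsometryEquiv φ (ρ g⁻¹)

variable {b : G → (F →L[ℝ] ℝ)}

theorem cocycle_one (hcoc : ∀ g h, b (g * h) = contragredient ρ g (b h) + b g) : b 1 = 0 := by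
  simpa [contragredient_one] using hcoc 1 1

/-- The affine action `g • φ = contragredient ρ g φ + b g` attached to a cocycle `b`. It lives on
`WeakDual ℝ F` because its fixed points are found by weak-* compactness. -/
noncomputable abbrev cocycleMulAction (hcoc : ∀ g h, b (g * h) = contragredient ρ g (b h) + b g) :
    MulAction G (WeakDual ℝ F) where
  smul g φ := StrongDual.toWeakDual (contragredient ρ g (toStrongDual φ) + b g)
  one_smul φ := (congrArg StrongDual.toWeakDual
    (by rw [contragredient_one, cocycle_one hcoc, add_zero])).trans (toWeakDual_toStrongDual φ)
  mul_smul g h φ := congrArg StrongDual.toWeakDual <| by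
    change _ = contragredient ρ g (contragredient ρ h (toStrongDual φ) + b h) + b g
    rw [hcoc, contragredient_mul, contragredient_add, add_assoc]

theorem bounded_cocycle_is_coboundary_general
    (hsep : TopologicalSpace.SeparableSpace (F →L[ℝ] ℝ)) (hb : ∃ C : ℝ, ∀ g : G, ‖b g‖ ≤ C)
    (hcoc : ∀ g h : G, b (g * h) = contragredient ρ g (b h) + b g) :
    ∃ v : F →L[ℝ] ℝ, ∀ g : G, b g = contragredient ρ g v - v := by
  let := cocycleMulAction hcoc
  have hsmul (g : G) (φ : WeakDual ℝ F) :
      toStrongDual (g • φ) = contragredient ρ g (toStrongDual φ) + b g := rfl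
  have : ContinuousConstSMul G (WeakDual ℝ F) := ⟨fun g ↦
    continuous_of_continuous_eval fun v ↦ (eval_continuous (ρ g⁻¹ v)).add continuous_const⟩
  have hiso (g : G) (φ ψ : WeakDual ℝ F) :
      ‖toStrongDual (g • φ - g • ψ)‖ = ‖toStrongDual (φ - ψ)‖ := by
    rw [map_sub, hsmul, hsmul, add_sub_add_right_eq_sub, ← contragredient_sub, norm_contragredient,
      map_sub]
  obtain ⟨C, hC⟩ := hb
  have hzero (g : G) : ‖toStrongDual (0 - g • (0 : WeakDual ℝ F))‖ ≤ C := by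
    simpa [hsmul, contragredient_zero] using hC g
  obtain ⟨φ, hφ⟩ := exists_forall_smul_eq_of_bounded_orbit hiso hzero
  refine ⟨-toStrongDual φ, fun g ↦ ?_⟩
  have hφg : contragredient ρ g (toStrongDual φ) + b g = toStrongDual φ := by rw [← hsmul, hφ]
  rw [contragredient_neg, sub_neg_eq_add, eq_neg_add_iff_add_eq, hφg]

end Cocycle

/-- `Hb^1(G,E) = 0` for every separable dual Banach `G`-module
`E = F*`: every bounded cocycle `b : G → E` (i.e. `b (g h) = g • b h + b g`) is a
coboundary `b g = g • v - v`. -/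
theorem bounded_cocycle_is_coboundary.{u}
    {G : Type*} [Group G]
    (F : Type u) [NormedAddCommGroup F] [NormedSpace ℝ F] [CompleteSpace F]
    (ρ : G →* (F ≃ₗᵢ[ℝ] F))
    (hsep : TopologicalSpace.SeparableSpace (F →L[ℝ] ℝ))
    (b : G → (F →L[ℝ] ℝ)) (hb : ∃ C : ℝ, ∀ g : G, ‖b g‖ ≤ C)
    (hcoc : ∀ g h : G, b (g * h) = contragredient ρ g (b h) + b g) :
    ∃ v : F →L[ℝ] ℝ, ∀ g : G, b g = contragredient ρ g v - v :=
  bounded_cocycle_is_coboundary_general hsep hb hcoc
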